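/- Let d ≥ 3. If (a,w,b) ∈ 𝒯 and f(a,w,b) = (a′,w′,b′), then (b, w̄, a) ∈ 𝒯 and f(b, w̄, a) = (b′, w̄′, a′), where x̄ denotes the reversal of the word x. -/

import Mathlib

namespace RichRT

variable {A : Type*}

/-- The word `w` occurs in the sequence `u` at position `j`. -/
def OccursAt (w : List A) (u : ℕ → A) (j : ℕ) : Prop :=
  w = (List.range w.length).map fun t => u (j + t)

/-- `w` is a factor of the infinite sequence `u`. -/
def IsFactorS (w : List A) (u : ℕ → A) : Prop :=
  ∃ j : ℕ, OccursAt w u j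

/-- `u` is recurrent: every factor occurs infinitely often. -/
def Recurrent (u : ℕ → A) : Prop :=
  ∀ w : List A, IsFactorS w u → ∀ N : ℕ, ∃ j, N ≤ j ∧ OccursAt w u j

/-- The number of distinct palindromic factors of a finite word. -/
noncomputable def palCount (w : List A) : ℕ :=
  Set.ncard {p : List A | p <:+: w ∧ p.reverse = p}

/-- A finite word of length `n` is rich if it has exactly `n+1` palindromic factors. -/
def RichWord (w : List A) : Prop := palCount w = w.length + 1

/-- A sequence is rich if all its factors are rich. -/
def RichSeq (u : ℕ → A) : Prop := ∀ w : List A, IsFactorS w u → RichWord w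

/-- The prefix of length `k` of the periodic sequence `vvv⋯`. -/
def powPref (v : List A) (k : ℕ) : List A := ((List.replicate k v).flatten).take k

/-- The set of exponents `k/|v|` of fractional powers `v^(k/|v|)` occurring in `u`,
with `|v| ≥ n`. -/
def expSet (u : ℕ → A) (n : ℕ) : Set ℝ :=
  {x | ∃ (v : List A) (k : ℕ), v ≠ [] ∧ n ≤ v.length ∧
    IsFactorS (powPref v k) u ∧ x = (k : ℝ) / (v.length : ℝ)}

/-- The critical exponent of a sequence, with values in `EReal`. -/
noncomputable def critExp (u : ℕ → A) : EReal :=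
  sSup ((fun x : ℝ => (x : EReal)) '' expSet u 0)

/-- The asymptotic critical exponent of a sequence: `⊤` if the critical exponent is `⊤`,
otherwise the limit (= infimum, by monotonicity) over `n` of the suprema of exponents of
powers `v^e` with `|v| ≥ n`. -/
noncomputable def acritExp (u : ℕ → A) : EReal :=
  if critExp u = ⊤ then ⊤
  else ⨅ n : ℕ, sSup ((fun x : ℝ => (x : EReal)) '' expSet u n)

/-- The morphism `φ_d` on letters: `i ↦ 0(i+1)` for `i < d-1`, `d-1 ↦ 0(d-1)(d-1)`. -/
def phiL (d : ℕ) (i : ℕ) : List ℕ :=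
  if i < d - 1 then [0, i + 1] else [0, d - 1, d - 1]

/-- The morphism `φ_d` on words. -/
def phiW (d : ℕ) (w : List ℕ) : List ℕ := w.flatMap (phiL d)

/-- `u` is the fixed point of `φ_d`: it begins with `0` and `φ_d(u) = u`, i.e. the image
of every prefix of `u` is again a prefix of `u`. -/
def IsPhiFixed (d : ℕ) (u : ℕ → ℕ) : Prop :=
  u 0 = 0 ∧ ∀ m : ℕ, OccursAt (phiW d ((List.range m).map u)) u 0

/-- Left extensions of `w` in `u`. -/
def Lext (u : ℕ → ℕ) (w : List ℕ) : Set (List ℕ) :=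
  {x | ∃ i : ℕ, x = i :: w ∧ IsFactorS x u}

/-- Right extensions of `w` in `u`. -/
def Rext (u : ℕ → ℕ) (w : List ℕ) : Set (List ℕ) :=
  {x | ∃ i : ℕ, x = w ++ [i] ∧ IsFactorS x u}

/-- Both-sided extensions of `w` in `u`. -/
def Bext (u : ℕ → ℕ) (w : List ℕ) : Set (List ℕ) :=
  {x | ∃ i j : ℕ, x = i :: (w ++ [j]) ∧ IsFactorS x u}

/-- `w` is a bispecial factor of `u`. -/
def Bispecial (u : ℕ → ℕ) (w : List ℕ) : Prop :=
  IsFactorS w u ∧ 2 ≤ (Lext u w).ncard ∧ 2 ≤ (Rext u w).ncard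

/-- The bilateral order `b(w) = #Bext(w) − #Lext(w) − #Rext(w) + 1`. -/
noncomputable def bord (u : ℕ → ℕ) (w : List ℕ) : ℤ :=
  ((Bext u w).ncard : ℤ) - ((Lext u w).ncard : ℤ) - ((Rext u w).ncard : ℤ) + 1

/-- The palindromes `F_0 = ε`, `F_i = φ(F_{i-1})0`. -/
def Fword (d : ℕ) : ℕ → List ℕ
  | 0 => []
  | i + 1 => phiW d (Fword d i) ++ [0]

/-- Membership in the set `𝒯` of bispecial triplets. -/
def TripleMem (d : ℕ) (u : ℕ → ℕ) (t : ℕ × List ℕ × ℕ) : Prop :=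
  Bispecial u t.2.1 ∧ t.1 < d - 1 ∧ t.2.2 < d - 1 ∧
    IsFactorS (t.1 :: t.2.1) u ∧ IsFactorS (t.2.1 ++ [t.2.2]) u

/-- The map `f` on triplets. -/
def fmap (d : ℕ) (t : ℕ × List ℕ × ℕ) : ℕ × List ℕ × ℕ :=
  ((t.1 + 1) % (d - 1),
   (if t.1 = d - 2 then [d - 1] else []) ++ phiW d t.2.1 ++ [0] ++
     (if t.2.2 = d - 2 then [d - 1] else []),
   (t.2.2 + 1) % (d - 1))

/-- The initial triplets `T_k = (0, ε, k)` for `k ≤ d-2` and `T_{d-1} = (0, d-1, 0)`. -/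
def Tinit (d k : ℕ) : ℕ × List ℕ × ℕ :=
  if k = d - 1 then (0, [d - 1], 0) else (0, ([] : List ℕ), k)

/-- The Parikh vector of a word. -/
def parikh (d : ℕ) (w : List ℕ) : Fin d → ℕ := fun i => w.count (i : ℕ)

/-- The incidence matrix of `φ_d`. -/
def Mmat (d : ℕ) : Matrix (Fin d) (Fin d) ℕ := fun i j => (phiL d (j : ℕ)).count (i : ℕ)

/-- `r` is a return word to `w` in `u`. -/
def ReturnWord (u : ℕ → ℕ) (w r : List ℕ) : Prop :=
  ∃ j ℓ : ℕ, j < ℓ ∧ OccursAt w u j ∧ OccursAt w u ℓ ∧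
    (∀ m, j < m → m < ℓ → ¬ OccursAt w u m) ∧
    r = (List.range (ℓ - j)).map fun t => u (j + t)

/-- `R` is a complete return word to `w` in `u`. -/
def CompleteReturn (u : ℕ → ℕ) (w R : List ℕ) : Prop :=
  ∃ r : List ℕ, ReturnWord u w r ∧ R = r ++ w

theorem occ_zero {w : List ℕ} {u : ℕ → ℕ} (h : OccursAt w u 0) :
    w = (List.range w.length).map u := by
  unfold OccursAt at h
  simpa using h

theorem occ_infix {w p : List ℕ} {u : ℕ → ℕ} (hp : p = (List.range p.length).map u)
    (h : w <:+: p) : IsFactorS w u := by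
  obtain ⟨s, t, rfl⟩ := h
  refine ⟨s.length, ?_⟩
  unfold OccursAt
  apply List.ext_getElem
  · simp
  · intro i h1 h2
    have h3 : s.length + i < (s ++ w ++ t).length := by simp; omega
    have h4 : (s ++ w ++ t)[s.length + i]'h3 = w[i] := by
      simp [h1]
    have h5 := List.getElem_of_eq hp h3
    rw [h4] at h5
    simpa using h5

theorem infix_of_occ {w p : List ℕ} {u : ℕ → ℕ} {j : ℕ}
    (hp : p = (List.range p.length).map u) (h : OccursAt w u j)
    (hl : j + w.length ≤ p.length) : w <:+: p := by
  have : w = (p.drop j).take w.length := by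
    apply List.ext_getElem
    · simp; omega
    · intro i h1 h2
      unfold OccursAt at h
      have h5 := List.getElem_of_eq h h1
      have h6 := List.getElem_of_eq hp (show j + i < p.length by omega)
      simp at h5 h6 ⊢
      rw [h5, h6]
  rw [this]
  exact (List.take_prefix _ _).isInfix.trans (List.drop_suffix _ _).isInfix

theorem phi_rev (d : ℕ) (w : List ℕ) :
    0 :: (phiW d w).reverse = phiW d w.reverse ++ [0] := by
  induction w with
  | nil => simp [phiW]
  | cons x w ih =>
    have e1 : phiW d (x :: w) = phiL d x ++ phiW d w := by simp [phiW]
    have e2 : phiW d (x :: w).reverse = phiW d w.reverse ++ phiL d x := by simp [phiW]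
    rw [e1, e2, List.reverse_append, ← List.cons_append, ih]
    unfold phiL
    split_ifs <;> simp

theorem F_pal (d n : ℕ) : (Fword d n).reverse = Fword d n := by
  induction n with
  | zero => simp [Fword]
  | succ n ih =>
    have := phi_rev d (Fword d n)
    rw [ih] at this
    simp [Fword, this]

theorem phi_len (d : ℕ) (w : List ℕ) : w.length ≤ (phiW d w).length := by
  induction w with
  | nil => simp
  | cons x w ih =>
    have e1 : phiW d (x :: w) = phiL d x ++ phiW d w := by simp [phiW]
    rw [e1]
    have : 1 ≤ (phiL d x).length := by unfold phiL; split_ifs <;> simp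
    simp; omega

theorem F_len (d n : ℕ) : n ≤ (Fword d n).length := by
  induction n with
  | zero => simp
  | succ n ih =>
    have := phi_len d (Fword d n)
    simp [Fword]; omega

theorem F_pref (d : ℕ) (u : ℕ → ℕ) (hu : IsPhiFixed d u) (n : ℕ) :
    Fword d n = (List.range (Fword d n).length).map u := by
  induction n with
  | zero => simp [Fword]
  | succ n ih =>
    have h := occ_zero (hu.2 ((Fword d n).length + 1))
    have hx : ∃ t, phiL d (u (Fword d n).length) = 0 :: t := by
      unfold phiL; split_ifs <;> simp
    obtain ⟨t, ht⟩ := hx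
    have e : phiW d ((List.range ((Fword d n).length + 1)).map u) = Fword d (n + 1) ++ t := by
      rw [List.range_succ, List.map_append, ← ih]
      simp [phiW, Fword, ht]
    rw [e] at h
    have h2 := congrArg (List.take (Fword d (n + 1)).length) h
    rw [List.take_left, ← List.map_take, List.take_range] at h2
    simpa using h2

theorem fac_rev {d : ℕ} {u : ℕ → ℕ} (hu : IsPhiFixed d u) {w : List ℕ}
    (h : IsFactorS w u) : IsFactorS w.reverse u := by
  obtain ⟨j, hj⟩ := h
  have h1 := infix_of_occ (F_pref d u hu (j + w.length)) hj (F_len d _)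
  have h2 := List.reverse_infix.mpr h1
  rw [F_pal] at h2
  exact occ_infix (F_pref d u hu (j + w.length)) h2

theorem Lext_rev {d : ℕ} {u : ℕ → ℕ} (hu : IsPhiFixed d u) (w : List ℕ) :
    Lext u w.reverse = List.reverse '' Rext u w := by
  ext x
  constructor
  · rintro ⟨i, rfl, h⟩
    exact ⟨w ++ [i], ⟨i, rfl, by simpa using fac_rev hu h⟩, by simp⟩
  · rintro ⟨y, ⟨i, rfl, h⟩, rfl⟩
    exact ⟨i, by simp, fac_rev hu h⟩

theorem Rext_rev {d : ℕ} {u : ℕ → ℕ} (hu : IsPhiFixed d u) (w : List ℕ) :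
    Rext u w.reverse = List.reverse '' Lext u w := by
  ext x
  constructor
  · rintro ⟨i, rfl, h⟩
    exact ⟨i :: w, ⟨i, rfl, by simpa using fac_rev hu h⟩, by simp⟩
  · rintro ⟨y, ⟨i, rfl, h⟩, rfl⟩
    exact ⟨i, by simp, fac_rev hu h⟩

/-- Let `d ≥ 3`. If `(a,w,b) ∈ 𝒯` and `f(a,w,b) = (a′,w′,b′)`, then
`(b, w̄, a) ∈ 𝒯` and `f(b, w̄, a) = (b′, w̄′, a′)`, where `x̄` is the reversal of `x`. -/
theorem statement9 (d : ℕ) (hd : 3 ≤ d) (u : ℕ → ℕ) (hu : IsPhiFixed d u)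
    (a b : ℕ) (w : List ℕ) (ht : TripleMem d u (a, w, b)) :
    TripleMem d u (b, w.reverse, a) ∧
    fmap d (b, w.reverse, a) =
      ((fmap d (a, w, b)).2.2, (fmap d (a, w, b)).2.1.reverse, (fmap d (a, w, b)).1) := by
  obtain ⟨⟨h0, hL, hR⟩, ha, hb, hla, hrb⟩ := ht
  refine ⟨⟨⟨fac_rev hu h0, ?_, ?_⟩, hb, ha, ?_, ?_⟩, ?_⟩
  · simp only [] at hR ⊢
    rw [Lext_rev hu, Set.ncard_image_of_injective _ List.reverse_injective]
    exact hR
  · simp only [] at hL ⊢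
    rw [Rext_rev hu, Set.ncard_image_of_injective _ List.reverse_injective]
    exact hL
  · simpa using fac_rev hu hrb
  · simpa using fac_rev hu hla
  · have h := phi_rev d w
    have e : ∀ c : ℕ, (if c = d - 2 then [d - 1] else []).reverse
        = (if c = d - 2 then [d - 1] else []) := by
      intro c; split_ifs <;> simp
    simp only [fmap, List.reverse_append, e, Prod.mk.injEq, true_and, and_true]
    simp only [List.reverse_singleton, List.singleton_append, List.append_assoc]
    rw [← List.cons_append, h]
    simp
end RichRT
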